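/- arXiv:math/0502003 — 2 statements merged into one kernel-verified Lean document; each statement's English description precedes it below -/
import Mathlib

section
/- (Second Bianchi identity, Eq. LGS.1aa.) Suppose the connection D on U is symmetric, i.e. Γ x u v = Γ x v u for all x ∈ U and u, v ∈ V. Define the covariant derivative of the curvature by (D_dρ)(a,b,c) := D_d (ρ(a,b,c)) − ρ(D_d a, b, c) − ρ(a, D_d b, c) − ρ(a, b, D_d c). Then for all vector fields a, b, c, d on U: (D_dρ)(a,b,c) + (D_aρ)(b,d,c) + (D_bρ)(d,a,c) = 0. -/
open scoped RealInnerProductSpace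

variable {V : Type*} [NormedAddCommGroup V] [InnerProductSpace ℝ V] [FiniteDimensional ℝ V]

/-- A vector field on `U` is a smooth map `U → V`. -/
def IsVectorField (U : Set V) (X : V → V) : Prop := ContDiffOn ℝ (⊤ : ℕ∞) X U

/-- Directional derivative `(a·∂X)(x) = fderiv ℝ X x (a x)`. -/
noncomputable def dirD (a X : V → V) : V → V := fun x => fderiv ℝ X x (a x)

/-- Lie bracket `[a,b] = a·∂b − b·∂a`. -/
noncomputable def bracket (a b : V → V) : V → V := fun x => dirD a b x - dirD b a x

/-- Smoothness of a connection field `Γ`. -/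
def IsConnection (U : Set V) (Γ : V → V →ₗ[ℝ] V →ₗ[ℝ] V) : Prop :=
  ∀ u v : V, ContDiffOn ℝ (⊤ : ℕ∞) (fun x => Γ x u v) U

/-- Covariant derivative associated to the connection field `Γ`. -/
noncomputable def covD (Γ : V → V →ₗ[ℝ] V →ₗ[ℝ] V) (a X : V → V) : V → V :=
  fun x => fderiv ℝ X x (a x) + Γ x (a x) (X x)

/-- Curvature of an abstract covariant-derivative operator. -/
noncomputable def curvOf (Dop : (V → V) → (V → V) → (V → V)) (a b c : V → V) : V → V :=
  fun x => Dop a (Dop b c) x - Dop b (Dop a c) x - Dop (bracket a b) c x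

/-- Curvature field `ρ(a,b,c) = D_a (D_b c) − D_b (D_a c) − D_{[a,b]} c`. -/
noncomputable def curv (Γ : V → V →ₗ[ℝ] V →ₗ[ℝ] V) : (V → V) → (V → V) → (V → V) → V → V :=
  curvOf (covD Γ)

/-- A metric on `U`: smooth, pointwise self-adjoint and invertible. -/
def IsMetric (U : Set V) (g : V → V →ₗ[ℝ] V) : Prop :=
  (∀ u : V, ContDiffOn ℝ (⊤ : ℕ∞) (fun x => g x u) U) ∧
  ∀ x ∈ U, (∀ u v : V, ⟪g x u, v⟫ = ⟪u, g x v⟫) ∧ Function.Bijective (g x)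

/-- Compatibility of an abstract covariant-derivative operator with the metric `g`:
`a·∂(X ·_g Y) = (D_a X) ·_g Y + X ·_g (D_a Y)` on `U`. -/
def CompatibleD (U : Set V) (Dop : (V → V) → (V → V) → (V → V)) (g : V → V →ₗ[ℝ] V) : Prop :=
  ∀ a X Y : V → V, IsVectorField U a → IsVectorField U X → IsVectorField U Y →
    ∀ x ∈ U, fderiv ℝ (fun y => ⟪g y (X y), Y y⟫) x (a x) =
      ⟪g x (Dop a X x), Y x⟫ + ⟪g x (X x), Dop a Y x⟫

/-- Compatibility of the connection `Γ` with the metric `g`. -/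
def Compatible (U : Set V) (Γ : V → V →ₗ[ℝ] V →ₗ[ℝ] V) (g : V → V →ₗ[ℝ] V) : Prop :=
  CompatibleD U (covD Γ) g

/-- Covariant derivative of the curvature:
`(D_dρ)(a,b,c) = D_d(ρ(a,b,c)) − ρ(D_d a,b,c) − ρ(a,D_d b,c) − ρ(a,b,D_d c)`. -/
noncomputable def covDCurv (Γ : V → V →ₗ[ℝ] V →ₗ[ℝ] V) (d a b c : V → V) : V → V :=
  fun x => covD Γ d (curv Γ a b c) x - curv Γ (covD Γ d a) b c x
    - curv Γ a (covD Γ d b) c x - curv Γ a b (covD Γ d c) x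

theorem vf_diffAt {U : Set V} (hU : IsOpen U) {X : V → V} (hX : IsVectorField U X) {x : V}
    (hx : x ∈ U) : DifferentiableAt ℝ X x :=
  (hX.contDiffAt (hU.mem_nhds hx)).differentiableAt (by simp)

theorem vf_dirD {U : Set V} (hU : IsOpen U) {a X : V → V} (ha : IsVectorField U a)
    (hX : IsVectorField U X) : IsVectorField U (dirD a X) := by
  have h : ContDiffOn ℝ (⊤ : ℕ∞) (fderiv ℝ X) U :=
    ContDiffOn.fderiv_of_isOpen hX hU (by exact_mod_cast le_top)
  exact h.clm_apply ha

theorem vf_bracket {U : Set V} (hU : IsOpen U) {a X : V → V} (ha : IsVectorField U a)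
    (hX : IsVectorField U X) : IsVectorField U (bracket a X) :=
  ContDiffOn.sub (vf_dirD hU ha hX) (vf_dirD hU hX ha)

theorem vf_gamma {U : Set V} {Γ : V → V →ₗ[ℝ] V →ₗ[ℝ] V} (hΓ : IsConnection U Γ)
    {a X : V → V} (ha : IsVectorField U a) (hX : IsVectorField U X) :
    IsVectorField U (fun x => Γ x (a x) (X x)) := by
  let e := Module.finBasis ℝ V
  have key : (fun x => Γ x (a x) (X x)) =
      fun x => ∑ i, ∑ j, (e.repr (a x) i) • (e.repr (X x) j) • Γ x (e i) (e j) := by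
    funext x
    conv_lhs => rw [← e.sum_repr (a x), ← e.sum_repr (X x)]
    simp only [map_sum, map_smul, LinearMap.sum_apply, LinearMap.smul_apply, Finset.smul_sum]
    rw [Finset.sum_comm]
    refine Finset.sum_congr rfl fun i _ => Finset.sum_congr rfl fun j _ => ?_
    first | rfl | rw [smul_comm]
  have co : ∀ (Y : V → V), IsVectorField U Y → ∀ i,
      ContDiffOn ℝ (⊤ : ℕ∞) (fun x => e.repr (Y x) i) U := by
    intro Y hY i
    exact (LinearMap.toContinuousLinearMap (e.coord i)).contDiff.comp_contDiffOn hY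
  unfold IsVectorField
  rw [key]
  refine ContDiffOn.sum fun i _ => ContDiffOn.sum fun j _ => ?_
  exact (co a ha i).smul ((co X hX j).smul (hΓ (e i) (e j)))

theorem vf_covD {U : Set V} (hU : IsOpen U) {Γ : V → V →ₗ[ℝ] V →ₗ[ℝ] V} (hΓ : IsConnection U Γ)
    {a X : V → V} (ha : IsVectorField U a) (hX : IsVectorField U X) :
    IsVectorField U (covD Γ a X) :=
  ContDiffOn.add (vf_dirD hU ha hX) (vf_gamma hΓ ha hX)

theorem covD_sub_right {U : Set V} (hU : IsOpen U) (Γ : V → V →ₗ[ℝ] V →ₗ[ℝ] V)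
    (a : V → V) {X Y Z : V → V} (hX : IsVectorField U X) (hY : IsVectorField U Y)
    (hZ : ∀ y ∈ U, Z y = X y - Y y) {x : V} (hx : x ∈ U) :
    covD Γ a Z x = covD Γ a X x - covD Γ a Y x := by
  have h : Z =ᶠ[nhds x] fun y => X y - Y y := by
    filter_upwards [hU.mem_nhds hx] with y hy using hZ y hy
  simp only [covD]
  rw [h.fderiv_eq, fderiv_fun_sub (vf_diffAt hU hX hx) (vf_diffAt hU hY hx), hZ x hx]
  simp only [map_sub, ContinuousLinearMap.sub_apply]
  abel

theorem covD_sub_left (Γ : V → V →ₗ[ℝ] V →ₗ[ℝ] V)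
    {p q r : V → V} (X : V → V) {x : V} (h : r x = p x - q x) :
    covD Γ r X x = covD Γ p X x - covD Γ q X x := by
  simp only [covD, h, map_sub, LinearMap.sub_apply]
  abel

theorem bracket_sub_left {U : Set V} (hU : IsOpen U) {p q r : V → V} (b : V → V)
    (hp : IsVectorField U p) (hq : IsVectorField U q)
    (hr : ∀ y ∈ U, r y = p y - q y) {x : V} (hx : x ∈ U) :
    bracket r b x = bracket p b x - bracket q b x := by
  have h : r =ᶠ[nhds x] fun y => p y - q y := by
    filter_upwards [hU.mem_nhds hx] with y hy using hr y hy
  simp only [bracket, dirD]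
  rw [h.fderiv_eq, fderiv_fun_sub (vf_diffAt hU hp hx) (vf_diffAt hU hq hx), hr x hx]
  simp only [map_sub, ContinuousLinearMap.sub_apply]
  abel

theorem curv_sub_left {U : Set V} (hU : IsOpen U) {Γ : V → V →ₗ[ℝ] V →ₗ[ℝ] V}
    (hΓ : IsConnection U Γ) {p q r b c : V → V}
    (hp : IsVectorField U p) (hq : IsVectorField U q) (hc : IsVectorField U c)
    (hr : ∀ y ∈ U, r y = p y - q y) {x : V} (hx : x ∈ U) :
    curv Γ r b c x = curv Γ p b c x - curv Γ q b c x := by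
  simp only [curv, curvOf]
  rw [covD_sub_left Γ (covD Γ b c) (hr x hx),
    covD_sub_left Γ c (bracket_sub_left hU b hp hq hr hx),
    covD_sub_right hU Γ b (vf_covD hU hΓ hp hc) (vf_covD hU hΓ hq hc)
      (fun y hy => covD_sub_left Γ c (hr y hy)) hx]
  abel

theorem curv_swap (Γ : V → V →ₗ[ℝ] V →ₗ[ℝ] V) (a b c : V → V) (x : V) :
    curv Γ a b c x = - curv Γ b a c x := by
  have h : bracket a b x = - bracket b a x := by simp [bracket]
  have : covD Γ (bracket a b) c x = - covD Γ (bracket b a) c x := by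
    simp only [covD, h, map_neg, LinearMap.neg_apply]
    abel
  simp only [curv, curvOf, this]
  abel

theorem torsion_zero {U : Set V} {Γ : V → V →ₗ[ℝ] V →ₗ[ℝ] V}
    (hsymm : ∀ x ∈ U, ∀ u v : V, Γ x u v = Γ x v u) (a b : V → V) :
    ∀ y ∈ U, bracket a b y = covD Γ a b y - covD Γ b a y := by
  intro y hy
  simp only [bracket, dirD, covD, hsymm y hy (a y) (b y)]
  abel

theorem bracket_jacobi {U : Set V} (hU : IsOpen U) {a b d : V → V} (ha : IsVectorField U a)
    (hb : IsVectorField U b) (hd : IsVectorField U d) {x : V} (hx : x ∈ U) :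
    bracket (bracket a b) d x + bracket (bracket b d) a x + bracket (bracket d a) b x = 0 := by
  have hs : ∀ p q : V → V, bracket p q = VectorField.lieBracket ℝ p q := fun _ _ => rfl
  have key := VectorField.leibniz_identity_lieBracket (𝕜 := ℝ) (n := ((⊤ : ℕ∞) : WithTop ℕ∞))
    (by simp only [minSmoothness_of_isRCLikeNormedField]; exact WithTop.coe_le_coe.2 le_top)
    (ContDiffOn.contDiffAt ha (hU.mem_nhds hx)) (ContDiffOn.contDiffAt hb (hU.mem_nhds hx))
    (ContDiffOn.contDiffAt hd (hU.mem_nhds hx))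
  simp only [hs]
  rw [VectorField.lieBracket_swap (V := VectorField.lieBracket ℝ b d),
    VectorField.lieBracket_swap (V := VectorField.lieBracket ℝ d a),
    show VectorField.lieBracket ℝ d a = - VectorField.lieBracket ℝ a d from
      funext fun _ => VectorField.lieBracket_swap]
  have h2 : VectorField.lieBracket ℝ b (-VectorField.lieBracket ℝ a d) x =
      - VectorField.lieBracket ℝ b (VectorField.lieBracket ℝ a d) x := by
    simp [VectorField.lieBracket, fderiv_neg]
    abel
  simp only [Pi.neg_apply, h2, key]
  abel

theorem curv_step {U : Set V} (hU : IsOpen U) {Γ : V → V →ₗ[ℝ] V →ₗ[ℝ] V}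
    (hΓ : IsConnection U Γ) {a b c : V → V} (d : V → V) (ha : IsVectorField U a)
    (hb : IsVectorField U b) (hc : IsVectorField U c) {x : V} (hx : x ∈ U) :
    covD Γ d (curv Γ a b c) x - curv Γ a b (covD Γ d c) x - curv Γ (bracket a b) d c x =
      covD Γ d (covD Γ a (covD Γ b c)) x - covD Γ d (covD Γ b (covD Γ a c)) x
      - covD Γ a (covD Γ b (covD Γ d c)) x + covD Γ b (covD Γ a (covD Γ d c)) x
      + covD Γ (bracket (bracket a b) d) c x := by
  have h1 := vf_covD hU hΓ ha (vf_covD hU hΓ hb hc)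
  have h2 := vf_covD hU hΓ hb (vf_covD hU hΓ ha hc)
  have h3 := vf_covD hU hΓ (vf_bracket hU ha hb) hc
  have e : covD Γ d (curv Γ a b c) x = covD Γ d (covD Γ a (covD Γ b c)) x
      - covD Γ d (covD Γ b (covD Γ a c)) x - covD Γ d (covD Γ (bracket a b) c) x := by
    rw [covD_sub_right hU Γ d (Z := curv Γ a b c)
      (X := fun y => covD Γ a (covD Γ b c) y - covD Γ b (covD Γ a c) y)
      (ContDiffOn.sub h1 h2) h3 (fun y _ => rfl) hx,
      covD_sub_right hU Γ d h1 h2 (fun y _ => rfl) hx]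
  rw [e]
  simp only [curv, curvOf]
  abel

/-- Eq. (LGS.1aa): second Bianchi identity for a symmetric connection. -/
theorem second_bianchi
    (U : Set V) (hU : IsOpen U)
    (Γ : V → V →ₗ[ℝ] V →ₗ[ℝ] V) (hΓ : IsConnection U Γ)
    (hsymm : ∀ x ∈ U, ∀ u v : V, Γ x u v = Γ x v u)
    (a b c d : V → V) (ha : IsVectorField U a) (hb : IsVectorField U b)
    (hc : IsVectorField U c) (hd : IsVectorField U d)
    (x : V) (hx : x ∈ U) :
    covDCurv Γ d a b c x + covDCurv Γ a b d c x + covDCurv Γ b d a c x = 0 := by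
  have s1 := curv_step hU hΓ d ha hb hc hx
  have s2 := curv_step hU hΓ a hb hd hc hx
  have s3 := curv_step hU hΓ b hd ha hc hx
  have t : ∀ p q r : V → V, IsVectorField U p → IsVectorField U q →
      curv Γ (bracket p q) r c x = curv Γ (covD Γ p q) r c x - curv Γ (covD Γ q p) r c x :=
    fun p q r hp hq => curv_sub_left hU hΓ (vf_covD hU hΓ hp hq) (vf_covD hU hΓ hq hp) hc
      (torsion_zero hsymm p q) hx
  rw [t a b d ha hb] at s1
  rw [t b d a hb hd] at s2
  rw [t d a b hd ha] at s3
  have j : covD Γ (bracket (bracket a b) d) c x + covD Γ (bracket (bracket b d) a) c x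
      + covD Γ (bracket (bracket d a) b) c x = 0 := by
    have hj := bracket_jacobi hU ha hb hd hx
    have h0 : covD Γ (bracket (bracket a b) d) c x + covD Γ (bracket (bracket b d) a) c x
      + covD Γ (bracket (bracket d a) b) c x = fderiv ℝ c x (bracket (bracket a b) d x
        + bracket (bracket b d) a x + bracket (bracket d a) b x) + Γ x (bracket (bracket a b) d x
        + bracket (bracket b d) a x + bracket (bracket d a) b x) (c x) := by
      simp only [covD, map_add, LinearMap.add_apply]
      abel
    rw [h0, hj]
    simp
  simp only [covDCurv]
  rw [curv_swap Γ a (covD Γ d b), curv_swap Γ b (covD Γ a d), curv_swap Γ d (covD Γ b a)]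
  have s := congrArg₂ (· + ·) (congrArg₂ (· + ·) s1 s2) s3
  rw [← j]
  refine Eq.trans ?_ (s.trans ?_) <;> abel
end

section
/- (Symmetry of the Ricci field, Eq. LGS.3.) Suppose the connection D on U is g-compatible and symmetric (Γ x u v = Γ x v u for all x, u, v). For u, v ∈ V and x ∈ U define Ric_x(u,v) := tr (w ↦ ρ(ŵ, û, v̂) x), where ŵ, û, v̂ denote the constant vector fields with values w, u, v. Then Ric_x is symmetric: Ric_x(u,v) = Ric_x(v,u) for all u, v ∈ V and x ∈ U. -/
open scoped RealInnerProductSpace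

variable {V : Type*} [NormedAddCommGroup V] [InnerProductSpace ℝ V] [FiniteDimensional ℝ V]

/-- `D_u (D_v w)` for constant fields, at `x`. -/
noncomputable def TT (Γ : V → V →ₗ[ℝ] V →ₗ[ℝ] V) (x u v w : V) : V :=
  covD Γ (fun _ => u) (fun y => Γ y v w) x

omit [FiniteDimensional ℝ V] in
lemma covD_const (Γ : V → V →ₗ[ℝ] V →ₗ[ℝ] V) (v w : V) :
    covD Γ (fun _ => v) (fun _ => w) = fun y => Γ y v w := by
  funext y; simp [covD]

omit [FiniteDimensional ℝ V] in
lemma curv_const (Γ : V → V →ₗ[ℝ] V →ₗ[ℝ] V) (x u v w : V) :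
    curv Γ (fun _ => u) (fun _ => v) (fun _ => w) x = TT Γ x u v w - TT Γ x v u w := by
  simp only [curv, curvOf, covD_const, TT]
  simp [covD, bracket, dirD]

omit [FiniteDimensional ℝ V] in
lemma TT_symm (U : Set V) (hU : IsOpen U) (Γ : V → V →ₗ[ℝ] V →ₗ[ℝ] V)
    (hsymm : ∀ x ∈ U, ∀ u v : V, Γ x u v = Γ x v u) (x : V) (hx : x ∈ U) (u v w : V) :
    TT Γ x u v w = TT Γ x u w v := by
  have h : (fun y => Γ y v w) =ᶠ[nhds x] (fun y => Γ y w v) := by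
    filter_upwards [hU.mem_nhds hx] with y hy using hsymm y hy v w
  simp only [TT, covD, h.fderiv_eq, hsymm x hx v w]

omit [FiniteDimensional ℝ V] in
lemma snd_deriv (U : Set V) (hU : IsOpen U)
    (Γ : V → V →ₗ[ℝ] V →ₗ[ℝ] V) (hΓ : IsConnection U Γ)
    (g : V → V →ₗ[ℝ] V) (hg : IsMetric U g) (hcomp : Compatible U Γ g)
    (x : V) (hx : x ∈ U) (u v w z : V) :
    fderiv ℝ (fun y => fderiv ℝ (fun y => ⟪g y w, z⟫) y v) x u =
      ⟪g x (TT Γ x u v w), z⟫ + ⟪g x (Γ x v w), Γ x u z⟫ + (⟪g x (Γ x u w), Γ x v z⟫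
        + ⟪g x w, TT Γ x u v z⟫) := by
  have hc : ∀ w : V, IsVectorField U (fun _ => w) := fun w => contDiffOn_const
  have h : (fun y => fderiv ℝ (fun y => ⟪g y w, z⟫) y v) =ᶠ[nhds x]
      (fun y => ⟪g y (Γ y v w), z⟫ + ⟪g y w, Γ y v z⟫) := by
    filter_upwards [hU.mem_nhds hx] with y hy
    have := hcomp _ _ _ (hc v) (hc w) (hc z) y hy
    simpa only [covD_const] using this
  have dΓ : ∀ a b : V, DifferentiableAt ℝ (fun y => Γ y a b) x := fun a b =>
    ((hΓ a b).contDiffAt (hU.mem_nhds hx)).differentiableAt (by simp)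
  have dg : ∀ a : V, DifferentiableAt ℝ (fun y => g y a) x := fun a =>
    ((hg.1 a).contDiffAt (hU.mem_nhds hx)).differentiableAt (by simp)
  have d1 : DifferentiableAt ℝ (fun y => ⟪g y (Γ y v w), z⟫) x := by
    have e : (fun y => ⟪g y (Γ y v w), z⟫) =ᶠ[nhds x] (fun y => ⟪Γ y v w, g y z⟫) := by
      filter_upwards [hU.mem_nhds hx] with y hy using (hg.2 y hy).1 _ _
    exact e.differentiableAt_iff.2 ((dΓ v w).inner ℝ (dg z))
  have d2 : DifferentiableAt ℝ (fun y => ⟪g y w, Γ y v z⟫) x := (dg w).inner ℝ (dΓ v z)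
  rw [h.fderiv_eq, fderiv_fun_add d1 d2]
  have c1 := hcomp _ _ _ (hc u) (hΓ v w) (hc z) x hx
  have c2 := hcomp _ _ _ (hc u) (hc w) (hΓ v z) x hx
  simp only [covD_const] at c1 c2
  rw [_root_.add_apply, c1, c2]
  rfl

omit [FiniteDimensional ℝ V] in
lemma skew (U : Set V) (hU : IsOpen U)
    (Γ : V → V →ₗ[ℝ] V →ₗ[ℝ] V) (hΓ : IsConnection U Γ)
    (g : V → V →ₗ[ℝ] V) (hg : IsMetric U g) (hcomp : Compatible U Γ g)
    (x : V) (hx : x ∈ U) (u v w z : V) :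
    ⟪g x (TT Γ x u v w - TT Γ x v u w), z⟫ + ⟪g x w, TT Γ x u v z - TT Γ x v u z⟫ = 0 := by
  have cF : ContDiffAt ℝ (⊤ : ℕ∞) (fun y => ⟪g y w, z⟫) x :=
    ((hg.1 w).contDiffAt (hU.mem_nhds hx)).inner ℝ contDiffAt_const
  have h2le : (2 : WithTop ℕ∞) ≤ ((⊤ : ℕ∞) : WithTop ℕ∞) :=
    WithTop.coe_le_coe.2 (le_top : (2 : ℕ∞) ≤ ⊤)
  have hs : IsSymmSndFDerivAt ℝ (fun y => ⟪g y w, z⟫) x :=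
    cF.isSymmSndFDerivAt (by rw [minSmoothness_of_isRCLikeNormedField]; exact h2le)
  have hd : DifferentiableAt ℝ (fderiv ℝ (fun y => ⟪g y w, z⟫)) x :=
    (cF.fderiv_right (m := 1) (by rw [one_add_one_eq_two]; exact h2le)).differentiableAt (by simp)
  have key : ∀ a b : V, fderiv ℝ (fun y => fderiv ℝ (fun y => ⟪g y w, z⟫) y b) x a =
      fderiv ℝ (fderiv ℝ (fun y => ⟪g y w, z⟫)) x a b := by
    intro a b
    rw [fderiv_clm_apply hd (differentiableAt_const b)]
    simp
  have h1 := snd_deriv U hU Γ hΓ g hg hcomp x hx u v w z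
  have h2 := snd_deriv U hU Γ hΓ g hg hcomp x hx v u w z
  rw [key] at h1 h2
  have h3 := hs.eq u v
  simp only [map_sub, inner_sub_left, inner_sub_right]
  linarith

lemma trace_skew (G N : V →ₗ[ℝ] V) (hG : Function.Bijective G)
    (h : ∀ w z : V, ⟪G (N w), z⟫ + ⟪G w, N z⟫ = 0) : LinearMap.trace ℝ V N = 0 := by
  let e := LinearEquiv.ofBijective G hG
  have h1 : e.conj N = -LinearMap.adjoint N := by
    ext w
    obtain ⟨w, rfl⟩ := e.surjective w
    refine ext_inner_right ℝ fun z => ?_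
    have := h w z
    simp only [LinearEquiv.conj_apply_apply, LinearEquiv.symm_apply_apply, LinearMap.neg_apply,
      inner_neg_left, LinearMap.adjoint_inner_left]
    simp only [e, LinearEquiv.ofBijective_apply]
    linarith
  have h2 := LinearMap.trace_conj' N e
  have h3 : LinearMap.trace ℝ V (LinearMap.adjoint N) = LinearMap.trace ℝ V N := by
    let b := stdOrthonormalBasis ℝ V
    rw [LinearMap.trace_eq_sum_inner _ b, LinearMap.trace_eq_sum_inner _ b]
    refine Finset.sum_congr rfl fun i _ => ?_
    rw [LinearMap.adjoint_inner_right, real_inner_comm]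
  rw [h1, map_neg, h3] at h2
  linarith


/-- Eq. (LGS.3): for a Levi-Civita structure the Ricci field
`Ric_x(u,v) = tr (w ↦ ρ(ŵ,û,v̂) x)` (with `ŵ,û,v̂` constant fields) is symmetric:
`Ric_x(u,v) = Ric_x(v,u)`. The traces are taken of the linear maps `L`, `M` realizing
`w ↦ ρ(ŵ,û,v̂) x` and `w ↦ ρ(ŵ,v̂,û) x`. -/
theorem ricci_field_symmetric
    (U : Set V) (hU : IsOpen U)
    (Γ : V → V →ₗ[ℝ] V →ₗ[ℝ] V) (hΓ : IsConnection U Γ)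
    (g : V → V →ₗ[ℝ] V) (hg : IsMetric U g)
    (hcomp : Compatible U Γ g)
    (hsymm : ∀ x ∈ U, ∀ u v : V, Γ x u v = Γ x v u)
    (x : V) (hx : x ∈ U) (u v : V)
    (L M : V →ₗ[ℝ] V)
    (hL : ∀ w : V, L w = curv Γ (fun _ => w) (fun _ => u) (fun _ => v) x)
    (hM : ∀ w : V, M w = curv Γ (fun _ => w) (fun _ => v) (fun _ => u) x) :
    LinearMap.trace ℝ V L = LinearMap.trace ℝ V M := by

  have hN : LinearMap.trace ℝ V (M - L) = 0 := by
    refine trace_skew (g x) (M - L) (hg.2 x hx).2 ?_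
    have hNw : ∀ w, (M - L) w = TT Γ x u v w - TT Γ x v u w := by
      intro w
      rw [LinearMap.sub_apply, hL, hM, curv_const, curv_const,
        TT_symm U hU Γ hsymm x hx w v u, TT_symm U hU Γ hsymm x hx v w u,
        TT_symm U hU Γ hsymm x hx u w v]
      abel
    intro w z
    rw [hNw, hNw]
    exact skew U hU Γ hΓ g hg hcomp x hx u v w z
  rw [map_sub] at hN
  linarith
end
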